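/- arXiv:2212.07857 — 3 statements merged into one kernel-verified Lean document; each statement's English description precedes it below -/
import Mathlib

section
/- If A and B are positive definite octonionic Hermitian 2×2 matrices then det(A,B) > 0, and if A and B are nonnegative definite then det(A,B) ≥ 0. (Lemma 5.9.) -/
noncomputable section

open scoped Quaternion

/-- The octonions, realized as pairs of quaternions (Cayley–Dickson). -/
abbrev Oct : Type := ℍ[ℝ] × ℍ[ℝ]

/-- Octonionic multiplication: (x,y)·(w,z) = (xw − z̄y, zx + yw̄). -/
def omul (a b : Oct) : Oct :=
  (a.1 * b.1 - star b.2 * a.2, b.2 * a.1 + a.2 * star b.1)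

/-- Octonionic conjugation. -/
def oconj (a : Oct) : Oct := (star a.1, -a.2)

/-- Real part of an octonion. -/
def oRe (a : Oct) : ℝ := a.1.re

/-- Squared norm |q|² = Re(q·q̄). -/
def onSq (a : Oct) : ℝ := oRe (omul a (oconj a))

/-- Octonionic Hermitian 2×2 matrix: (α, β, q) represents [[α, q],[q̄, β]]. -/
abbrev Herm : Type := ℝ × ℝ × Oct

/-- Determinant of an octonionic Hermitian 2×2 matrix. -/
def detH (A : Herm) : ℝ := A.1 * A.2.1 - onSq A.2.2

/-- The quadratic form ξ ↦ Re(ξ*Aξ). -/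
def qform (A : Herm) (ξ : Oct × Oct) : ℝ :=
  A.1 * onSq ξ.1 + A.2.1 * onSq ξ.2 + 2 * oRe (omul (oconj ξ.1) (omul A.2.2 ξ.2))

/-- Positive definiteness. -/
def PosDefH (A : Herm) : Prop := ∀ ξ : Oct × Oct, ξ ≠ 0 → 0 < qform A ξ

/-- Nonnegative definiteness. -/
def NonnegDefH (A : Herm) : Prop := ∀ ξ : Oct × Oct, 0 ≤ qform A ξ

/-- Mixed determinant of two octonionic Hermitian 2×2 matrices. -/
def mdet (A B : Herm) : ℝ :=
  (1 / 2) * (A.1 * B.2.1 + B.1 * A.2.1 - 2 * oRe (omul A.2.2 (oconj B.2.2)))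

lemma disc_aux (a b c : ℝ) (h : ∀ s t : ℝ, 0 ≤ a * s ^ 2 + b * t ^ 2 + 2 * s * t * c) :
    0 ≤ a ∧ 0 ≤ b ∧ c ^ 2 ≤ a * b := by
  have ha : 0 ≤ a := by simpa using h 1 0
  have hb : 0 ≤ b := by simpa using h 0 1
  refine ⟨ha, hb, ?_⟩
  rcases ha.eq_or_lt with h0 | h0
  · subst h0
    have e1 := h (-b) c
    have e2 := h (-c) 1
    rcases hb.eq_or_lt with h1 | h1
    · subst h1
      nlinarith
    · by_contra! hc
      nlinarith [mul_pos h1 (show 0 < c ^ 2 by linarith)]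
  · have := h (-c) a
    have h2 : 0 ≤ a * (a * b - c ^ 2) := by nlinarith
    have := nonneg_of_mul_nonneg_right h2 h0
    linarith

lemma onSq_nonneg' (q : Oct) : 0 ≤ onSq q := by
  simp [onSq, oRe, omul, oconj]
  nlinarith [sq_nonneg q.1.re, sq_nonneg q.1.imI, sq_nonneg q.1.imJ, sq_nonneg q.1.imK,
    sq_nonneg q.2.re, sq_nonneg q.2.imI, sq_nonneg q.2.imJ, sq_nonneg q.2.imK]

lemma cs_aux (p q : Oct) : (oRe (omul p (oconj q))) ^ 2 ≤ onSq p * onSq q := by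
  refine (disc_aux _ _ _ fun s t => ?_).2.2
  have h := onSq_nonneg' (s • p + t • q)
  refine h.trans_eq ?_
  simp [onSq, oRe, omul, oconj]
  ring

lemma qform_aux (A : Herm) (s t : ℝ) :
    qform A (s • A.2.2, t • ((1, 0) : Oct)) =
      A.1 * onSq A.2.2 * s ^ 2 + A.2.1 * t ^ 2 + 2 * s * t * onSq A.2.2 := by
  simp [qform, onSq, oRe, omul, oconj]
  ring

lemma qform_fst (A : Herm) : qform A ((1, 0), 0) = A.1 := by
  simp [qform, onSq, oRe, omul, oconj]

lemma nonneg_aux (A : Herm) (h : NonnegDefH A) :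
    0 ≤ A.1 ∧ 0 ≤ A.2.1 ∧ onSq A.2.2 ≤ A.1 * A.2.1 := by
  have h1 := disc_aux _ _ _ fun s t => (qform_aux A s t).symm ▸ h _
  have h2 : 0 ≤ A.1 := qform_fst A ▸ h _
  refine ⟨h2, h1.2.1, ?_⟩
  have hN := onSq_nonneg' A.2.2
  rcases hN.eq_or_lt with h0 | h0
  · rw [← h0]; exact mul_nonneg h2 h1.2.1
  · have := h1.2.2
    by_contra! hc
    nlinarith [mul_pos h0 (sub_pos.2 hc)]

lemma pos_aux (A : Herm) (h : PosDefH A) :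
    0 < A.1 ∧ 0 ≤ A.2.1 ∧ onSq A.2.2 < A.1 * A.2.1 := by
  have hn : NonnegDefH A := by
    intro ξ
    by_cases hx : ξ = 0
    · subst hx; simp [qform, onSq, oRe, omul, oconj]
    · exact (h ξ hx).le
  have h2 : 0 < A.1 := by
    rw [← qform_fst A]; apply h; simp [Prod.ext_iff]
  refine ⟨h2, (nonneg_aux A hn).2.1, ?_⟩
  have h3 := h ((-1 : ℝ) • A.2.2, A.1 • ((1, 0) : Oct)) (by simp [Prod.ext_iff, h2.ne'])
  rw [qform_aux] at h3
  have h4 : 0 < A.1 * (A.1 * A.2.1 - onSq A.2.2) := by nlinarith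
  have := pos_of_mul_pos_right h4 h2.le
  linarith

/-- Lemma 5.9: the mixed determinant of positive definite matrices is positive,
and of nonnegative definite matrices is nonnegative. -/
theorem mixed_det_positive (A B : Herm) :
    (PosDefH A → PosDefH B → 0 < mdet A B) ∧
    (NonnegDefH A → NonnegDefH B → 0 ≤ mdet A B) := by
  have hc := cs_aux A.2.2 B.2.2
  have hA := onSq_nonneg' A.2.2
  have hB := onSq_nonneg' B.2.2
  constructor
  · intro h k
    obtain ⟨a, b, c⟩ := pos_aux A h
    obtain ⟨a', b', c'⟩ := pos_aux B k
    have h1 := mul_lt_mul'' c c' hA hB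
    have h2 : (2 * oRe (omul A.2.2 (oconj B.2.2))) ^ 2 < (A.1 * B.2.1 + B.1 * A.2.1) ^ 2 := by
      nlinarith [sq_nonneg (A.1 * B.2.1 - B.1 * A.2.1)]
    have h3 := lt_of_pow_lt_pow_left₀ 2 (by positivity) h2
    unfold mdet
    linarith
  · intro h k
    obtain ⟨a, b, c⟩ := nonneg_aux A h
    obtain ⟨a', b', c'⟩ := nonneg_aux B k
    have h1 := mul_le_mul c c' hB (hA.trans c)
    have h2 : (2 * oRe (omul A.2.2 (oconj B.2.2))) ^ 2 ≤ (A.1 * B.2.1 + B.1 * A.2.1) ^ 2 := by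
      nlinarith [sq_nonneg (A.1 * B.2.1 - B.1 * A.2.1)]
    have h3 := abs_le_of_sq_le_sq h2 (by positivity)
    unfold mdet
    linarith [le_abs_self (2 * oRe (omul A.2.2 (oconj B.2.2)))]
end
end

section
/- Any two octonionic lines in 𝕆² either intersect only in the zero vector or coincide; moreover, every nonzero vector ξ ∈ 𝕆² is contained in exactly one octonionic line. (Lemma 3.2(ii),(iii).) -/
noncomputable section

open scoped Quaternion

/-- An octonionic (right) line in 𝕆²: either L_a = {(q, a·q) : q ∈ 𝕆} for some a ∈ 𝕆,
or the line at infinity L_∞ = {(0, q) : q ∈ 𝕆}. -/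
def IsOLine (L : Set (Oct × Oct)) : Prop :=
  (∃ a : Oct, L = {p | ∃ q : Oct, p = (q, omul a q)}) ∨
  L = {p | ∃ q : Oct, p = (0, q)}

/-- Helper: |b|² as a sum of two quaternion norms. -/
def octN (b : Oct) : ℝ := Quaternion.normSq b.1 + Quaternion.normSq b.2

theorem omul_omul_oconj (a b : Oct) : omul (omul a b) (oconj b) = octN b • a := by
  obtain ⟨x, y⟩ := a
  obtain ⟨w, z⟩ := b
  ext <;> simp [omul, oconj, octN, Quaternion.normSq_def'] <;> ring

theorem oconj_oconj (b : Oct) : oconj (oconj b) = b := by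
  simp [oconj]

theorem octN_oconj (b : Oct) : octN (oconj b) = octN b := by
  simp [oconj, octN]

theorem octN_ne_zero {b : Oct} (hb : b ≠ 0) : octN b ≠ 0 := by
  intro h
  apply hb
  have h1 : 0 ≤ Quaternion.normSq b.1 := Quaternion.normSq_nonneg
  have h2 : 0 ≤ Quaternion.normSq b.2 := Quaternion.normSq_nonneg
  unfold octN at h
  exact Prod.ext (Quaternion.normSq_eq_zero.mp (by linarith))
    (Quaternion.normSq_eq_zero.mp (by linarith))

theorem omul_right_cancel {a c b : Oct} (hb : b ≠ 0) (h : omul a b = omul c b) : a = c := by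
  have h1 := congrArg (fun t => omul t (oconj b)) h
  simp only [omul_omul_oconj] at h1
  exact smul_right_injective Oct (octN_ne_zero hb) h1

theorem omul_smul_left (r : ℝ) (a b : Oct) : omul (r • a) b = r • omul a b := by
  ext <;> simp [omul] <;> ring

theorem omul_zero_right (a : Oct) : omul a 0 = 0 := by
  simp [omul]

theorem exists_omul_eq (c : Oct) {b : Oct} (hb : b ≠ 0) : ∃ a, c = omul a b := by
  refine ⟨(octN b)⁻¹ • omul c (oconj b), ?_⟩
  have h := omul_omul_oconj c (oconj b)
  rw [oconj_oconj, octN_oconj] at h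
  rw [omul_smul_left, h, inv_smul_smul₀ (octN_ne_zero hb)]

theorem IsOLine.zero_mem {L : Set (Oct × Oct)} (hL : IsOLine L) : (0 : Oct × Oct) ∈ L := by
  rcases hL with ⟨a, rfl⟩ | rfl
  · exact ⟨0, by rw [omul_zero_right]; rfl⟩
  · exact ⟨0, rfl⟩

theorem IsOLine.eq_of_mem {L M : Set (Oct × Oct)} (hL : IsOLine L) (hM : IsOLine M)
    {p : Oct × Oct} (hp : p ≠ 0) (h1 : p ∈ L) (h2 : p ∈ M) : L = M := by
  rcases hL with ⟨a, rfl⟩ | rfl <;> rcases hM with ⟨c, rfl⟩ | rfl <;>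
    obtain ⟨q, rfl⟩ := h1 <;> obtain ⟨r, hr⟩ := h2 <;> rw [Prod.mk.injEq] at hr <;>
    obtain ⟨e1, e2⟩ := hr
  · subst e1
    have hq : q ≠ 0 := by
      rintro rfl
      exact hp (by rw [omul_zero_right]; rfl)
    rw [omul_right_cancel hq e2]
  · subst e1
    exact absurd (by rw [omul_zero_right]; rfl) hp
  · subst e1
    rw [omul_zero_right] at e2
    subst e2
    exact absurd rfl hp

/-- Lemma 3.2(ii),(iii): two octonionic lines either meet only at 0 or coincide,
and every nonzero vector of 𝕆² lies on exactly one octonionic line. -/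
theorem octonionic_lines_intersect :
    (∀ L₁ L₂ : Set (Oct × Oct), IsOLine L₁ → IsOLine L₂ →
        L₁ ∩ L₂ = {0} ∨ L₁ = L₂) ∧
    (∀ ξ : Oct × Oct, ξ ≠ 0 →
        ∃! L : Set (Oct × Oct), IsOLine L ∧ ξ ∈ L) := by
  refine ⟨fun L M hL hM => ?_, fun ξ hξ => ?_⟩
  · by_cases h : ∃ p ∈ L ∩ M, p ≠ 0
    · obtain ⟨p, ⟨h1, h2⟩, hp⟩ := h
      exact Or.inr (hL.eq_of_mem hM hp h1 h2)
    · push Not at h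
      left
      ext p
      constructor
      · intro hp
        exact h p hp
      · intro hp
        rw [Set.mem_singleton_iff] at hp
        subst hp
        exact ⟨hL.zero_mem, hM.zero_mem⟩
  · have hex : ∃ L : Set (Oct × Oct), IsOLine L ∧ ξ ∈ L := by
      obtain ⟨b, c⟩ := ξ
      by_cases hb : b = 0
      · subst hb
        exact ⟨_, Or.inr rfl, c, rfl⟩
      · obtain ⟨a, ha⟩ := exists_omul_eq c hb
        exact ⟨_, Or.inl ⟨a, rfl⟩, b, by rw [← ha]⟩
    obtain ⟨L, hL, hm⟩ := hex
    exact ⟨L, ⟨hL, hm⟩, fun M hM => hM.1.eq_of_mem hL hξ hM.2 hm⟩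
end
end

section
/- Let X be a 2×2 octonionic Hermitian matrix, viewed as the matrix [[α, q], [conj(q), β]] with α, β ∈ ℝ, q ∈ 𝕆, let A be a traceless 2×2 matrix with octonionic entries, and let ξ ∈ 𝕆². Then Re(ξ*·((X·A)·ξ)) = Re(ξ*·(X·(A·ξ))), where for a 2×2 octonionic matrix M one sets Re(ξ*Mξ) := Σ_{i,j} Re(conj(ξ_i)·(M_{ij}·ξ_j)) and on the right-hand side Re(ξ*·(X·η)) := Σ_{i,j} Re(conj(ξ_i)·(X_{ij}·η_j)) with η = A·ξ. (Identity (22) proved in Proposition 6.13.) -/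
noncomputable section

open scoped Quaternion

/-- 2×2 matrices with octonionic entries. -/
abbrev Omat : Type := Fin 2 → Fin 2 → Oct

/-- Action of a 2×2 octonionic matrix on a column vector. -/
def matVec (A : Omat) (ξ : Fin 2 → Oct) : Fin 2 → Oct :=
  fun i => ∑ j, omul (A i j) (ξ j)

/-- Product of 2×2 octonionic matrices. -/
def matMul (X Y : Omat) : Omat := fun i j => ∑ k, omul (X i k) (Y k j)

/-- Embedding of ℝ into the octonions. -/
def oR (r : ℝ) : Oct := ((r : ℍ[ℝ]), 0)

/-- The 2×2 octonionic matrix [[α, q],[q̄, β]] attached to a Hermitian triple. -/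
def hermToMat (A : Herm) : Omat := ![![oR A.1, A.2.2], ![oconj A.2.2, oR A.2.1]]

/-- The sesquilinear expression Σ_{i,j} Re(conj(ξᵢ)·(Xᵢⱼ·ηⱼ)). -/
def sesq (X : Omat) (ξ η : Fin 2 → Oct) : ℝ :=
  ∑ i, ∑ j, oRe (omul (oconj (ξ i)) (omul (X i j) (η j)))

lemma omul_add' (a b c : Oct) : omul a (b + c) = omul a b + omul a c := by
  ext1
  · simp only [omul, Prod.fst_add, Prod.snd_add, star_add]; noncomm_ring
  · simp only [omul, Prod.fst_add, Prod.snd_add, star_add]; noncomm_ring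

lemma add_omul' (a b c : Oct) : omul (a + b) c = omul a c + omul b c := by
  ext1
  · simp only [omul, Prod.fst_add, Prod.snd_add]; noncomm_ring
  · simp only [omul, Prod.fst_add, Prod.snd_add]; noncomm_ring

lemma oRe_add (a b : Oct) : oRe (a + b) = oRe a + oRe b := by simp [oRe]

lemma oR_assoc (r : ℝ) (a b : Oct) : omul (omul (oR r) a) b = omul (oR r) (omul a b) := by
  ext <;> simp [omul, oR] <;> ring

lemma neg_omul' (a b : Oct) : omul (-a) b = -omul a b := by
  ext1 <;> simp [omul] <;> abel

lemma omul_neg' (a b : Oct) : omul a (-b) = -omul a b := by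
  ext1 <;> simp [omul] <;> abel

lemma oRe_neg (a : Oct) : oRe (-a) = -oRe a := by simp [oRe]

set_option maxHeartbeats 4000000 in
lemma alt_same (x q a : Oct) :
    oRe (omul (oconj x) (omul (omul q a) x)) = oRe (omul (oconj x) (omul q (omul a x))) := by
  simp [omul, oRe, oconj]
  ring

set_option maxHeartbeats 4000000 in
lemma alt_swap (x y q a : Oct) :
    oRe (omul (oconj x) (omul (omul q a) y)) - oRe (omul (oconj x) (omul q (omul a y)))
      = oRe (omul (oconj y) (omul (omul (oconj q) a) x))
        - oRe (omul (oconj y) (omul (oconj q) (omul a x))) := by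
  simp [omul, oRe, oconj]
  ring

/-- Identity (22) of Proposition 6.13: for X octonionic Hermitian, A traceless and
ξ ∈ 𝕆², Re(ξ*((X·A)ξ)) = Re(ξ*(X·(Aξ))). -/
theorem reQuad_matMul (X : Herm) (A : Omat) (hA : A 0 0 + A 1 1 = 0)
    (ξ : Fin 2 → Oct) :
    sesq (matMul (hermToMat X) A) ξ ξ = sesq (hermToMat X) ξ (matVec A ξ) := by
  have h1 : A 1 1 = -A 0 0 := by rw [eq_neg_iff_add_eq_zero, add_comm]; exact hA
  have e1 := alt_same (ξ 0) X.2.2 (A 1 0)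
  have e2 := alt_same (ξ 1) (oconj X.2.2) (A 0 1)
  have e3 := alt_swap (ξ 0) (ξ 1) X.2.2 (A 0 0)
  simp only [sesq, matMul, matVec, hermToMat, Fin.sum_univ_two, Matrix.cons_val_zero,
    Matrix.cons_val_one, omul_add', add_omul', oRe_add, oR_assoc, h1, neg_omul', omul_neg', oRe_neg]
  linarith
end
end
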